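/- arXiv:2004.00500 — 3 statements merged into one kernel-verified Lean document; each statement's English description precedes it below -/
import Mathlib

section
/- Let f : ℝ^d → ℝ be Lipschitz continuous and δ > 0. Define the smoothed function f̂(w) = E_{v ∼ μ_B}[f(w + δ v)]. Then f̂ is differentiable at every w ∈ ℝ^d and its gradient satisfies ∇f̂(w) = (d/δ) · E_{u ∼ μ_S}[f(w + δ u) u]. -/
open MeasureTheory Metric RealInnerProductSpace

/-- The uniform probability measure on the closed unit ball of `ℝ^d`
(normalized restricted Lebesgue measure). -/
noncomputable def ballUniform (d : ℕ) : Measure (EuclideanSpace ℝ (Fin d)) :=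
  ((volume : Measure (EuclideanSpace ℝ (Fin d))) (closedBall 0 1))⁻¹ •
    (volume : Measure (EuclideanSpace ℝ (Fin d))).restrict (closedBall 0 1)

/-- The uniform probability measure on the unit sphere of `ℝ^d`
(the normalized rotation-invariant surface measure), viewed as a measure on the
ambient space. -/
noncomputable def sphereUniform (d : ℕ) : Measure (EuclideanSpace ℝ (Fin d)) :=
  ((volume : Measure (EuclideanSpace ℝ (Fin d))).toSphere Set.univ)⁻¹ •
    Measure.map Subtype.val (volume : Measure (EuclideanSpace ℝ (Fin d))).toSphere

/-!
In polar coordinates, the unit ball centred at a small vector `h` is the region `r ≤ ρ h u` under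
a radial graph over the unit sphere, where `ρ h u = ⟪u, h⟫ + √(1 - ‖h‖ ^ 2 + ⟪u, h⟫ ^ 2)`. Hence
`∫ v in closedBall h 1, g v` is the integral over `u` in the sphere of
`∫ r in 0..ρ h u, r ^ (n - 1) * g (r • u)`, where `n` is the dimension. Since `ρ 0 u = 1` and
`ρ · u` has gradient `u` at `0`, the fundamental theorem of calculus shows that the inner integral
has gradient `g u • u` at `h = 0`. The bound `|ρ h u - 1| ≤ ‖h‖` allows differentiation under the
outer integral. The factor `n` of the theorem is the ratio between the area of the sphere and the
volume of the ball.
-/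

open Set Filter Topology

section PolarCoordinates

variable {E F : Type*} [NormedAddCommGroup E] [NormedSpace ℝ E] [FiniteDimensional ℝ E]
  [MeasurableSpace E] [BorelSpace E] [NormedAddCommGroup F] [NormedSpace ℝ F]
  (μ : Measure E) [μ.IsAddHaarMeasure]

lemma integral_volumeIoiPow (n : ℕ) (k : ℝ → F) :
    ∫ r : Ioi (0 : ℝ), k r ∂(Measure.volumeIoiPow n) = ∫ r in Ioi (0 : ℝ), r ^ n • k r := by
  simp only [Measure.volumeIoiPow, ENNReal.ofReal]
  rw [integral_withDensity_eq_integral_smul (measurable_subtype_coe.pow_const _).real_toNNReal,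
    integral_subtype_comap measurableSet_Ioi fun r ↦ Real.toNNReal (r ^ n) • k r]
  refine setIntegral_congr_fun measurableSet_Ioi fun r hr ↦ ?_
  simp only [NNReal.smul_def, Real.coe_toNNReal _ (pow_nonneg (mem_Ioi.1 hr).le _)]

variable [Nontrivial E]

lemma integral_eq_integral_toSphere_integral_Ioi {k : E → F} (hk : Integrable k μ) :
    ∫ x, k x ∂μ = ∫ u : sphere (0 : E) 1, (∫ r in Ioi (0 : ℝ),
      r ^ (Module.finrank ℝ E - 1) • k (r • (u : E))) ∂μ.toSphere := by
  have hpolar := μ.measurePreserving_homeomorphUnitSphereProd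
  have hemb := (homeomorphUnitSphereProd E).measurableEmbedding
  let K : sphere (0 : E) 1 × Ioi (0 : ℝ) → F := fun p ↦ k ((p.2 : ℝ) • (p.1 : E))
  have hK : K ∘ homeomorphUnitSphereProd E = k ∘ Subtype.val := by
    ext x
    simp only [K, Function.comp_apply, ← homeomorphUnitSphereProd_symm_apply_coe,
      Homeomorph.symm_apply_apply]
  have hKint : Integrable K (μ.toSphere.prod (.volumeIoiPow (Module.finrank ℝ E - 1))) := by
    rw [← hpolar.integrable_comp_emb hemb, hK,
      ← integrableOn_iff_comap_subtypeVal (measurableSet_singleton _).compl]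
    exact hk.integrableOn
  calc
    ∫ x, k x ∂μ = ∫ x in {(0 : E)}ᶜ, k x ∂μ := by rw [restrict_compl_singleton]
    _ = ∫ x : ({0}ᶜ : Set E), k x ∂(μ.comap (↑)) :=
      (integral_subtype_comap (measurableSet_singleton _).compl k).symm
    _ = ∫ p, K p ∂μ.toSphere.prod (.volumeIoiPow (Module.finrank ℝ E - 1)) := by
      rw [← hpolar.integral_comp hemb K]
      exact congrArg (fun φ ↦ ∫ x, φ x ∂(μ.comap (↑))) hK.symm
    _ = ∫ u : sphere (0 : E) 1, ∫ r : Ioi (0 : ℝ), k ((r : ℝ) • (u : E))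
          ∂(.volumeIoiPow (Module.finrank ℝ E - 1)) ∂μ.toSphere := integral_prod _ hKint
    _ = _ := by
      congr with u
      exact integral_volumeIoiPow _ fun r ↦ k (r • (u : E))

lemma setIntegral_eq_integral_toSphere_intervalIntegral {A : Set E} (hA : MeasurableSet A)
    {ρ : sphere (0 : E) 1 → ℝ} (hρ : ∀ u, 0 ≤ ρ u)
    (hAρ : ∀ (u : sphere (0 : E) 1) (r : ℝ), 0 < r → (r • (u : E) ∈ A ↔ r ≤ ρ u))
    {k : E → F} (hk : IntegrableOn k A μ) :
    ∫ x in A, k x ∂μ = ∫ u : sphere (0 : E) 1, (∫ r in (0 : ℝ)..ρ u,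
      r ^ (Module.finrank ℝ E - 1) • k (r • (u : E))) ∂μ.toSphere := by
  rw [← integral_indicator hA,
    integral_eq_integral_toSphere_integral_Ioi μ ((integrable_indicator_iff hA).2 hk)]
  congr with u
  calc
    ∫ r in Ioi (0 : ℝ), r ^ (Module.finrank ℝ E - 1) • A.indicator k (r • (u : E))
      = ∫ r in Ioi (0 : ℝ), (Iic (ρ u)).indicator
          (fun r ↦ r ^ (Module.finrank ℝ E - 1) • k (r • (u : E))) r := by
      refine setIntegral_congr_fun measurableSet_Ioi fun r hr ↦ ?_
      by_cases hru : r ≤ ρ u <;> simp [indicator, hAρ u r hr, hru]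
    _ = ∫ r in (0 : ℝ)..ρ u, r ^ (Module.finrank ℝ E - 1) • k (r • (u : E)) := by
      rw [setIntegral_indicator measurableSet_Iic, Ioi_inter_Iic,
        intervalIntegral.integral_of_le (hρ u)]

end PolarCoordinates

section ExitRadius

variable {E : Type*} [NormedAddCommGroup E] [InnerProductSpace ℝ E]

/-- The distance `ρ h u` from the origin at which the ray in the unit direction `u` leaves the
closed unit ball centred at `h`, for `‖h‖ ≤ 1`: the larger root `r` of `‖r • u - h‖ = 1`. -/
noncomputable def exitRadius (h u : E) : ℝ :=
  ⟪u, h⟫ + √(1 - ‖h‖ ^ 2 + ⟪u, h⟫ ^ 2)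

lemma exitRadius_zero_left (u : E) : exitRadius 0 u = 1 := by
  simp [exitRadius]

lemma continuous_exitRadius (h : E) : Continuous (exitRadius h) := by
  unfold exitRadius
  fun_prop

lemma norm_smul_sub_sq {u : E} (hu : ‖u‖ = 1) (h : E) (r : ℝ) :
    ‖r • u - h‖ ^ 2 = (r - ⟪u, h⟫) ^ 2 + ‖h‖ ^ 2 - ⟪u, h⟫ ^ 2 := by
  rw [norm_sub_sq_real, norm_smul, hu, real_inner_smul_left, mul_one, Real.norm_eq_abs, sq_abs]
  ring

lemma norm_smul_sub_le_one_iff {h u : E} (hh : ‖h‖ ≤ 1) (hu : ‖u‖ = 1) {r : ℝ} (hr : 0 ≤ r) :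
    ‖r • u - h‖ ≤ 1 ↔ r ≤ exitRadius h u := by
  have hh_sq : ‖h‖ ^ 2 ≤ 1 := pow_le_one₀ (norm_nonneg h) hh
  have hrad_nonneg : 0 ≤ 1 - ‖h‖ ^ 2 + ⟪u, h⟫ ^ 2 := by nlinarith
  have hlower : ⟪u, h⟫ ≤ √(1 - ‖h‖ ^ 2 + ⟪u, h⟫ ^ 2) :=
    Real.le_sqrt_of_sq_le (by linarith)
  calc
    ‖r • u - h‖ ≤ 1 ↔ (r - ⟪u, h⟫) ^ 2 ≤ 1 - ‖h‖ ^ 2 + ⟪u, h⟫ ^ 2 := by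
      rw [← sq_le_one_iff₀ (norm_nonneg _), norm_smul_sub_sq hu]
      constructor <;> intro _ <;> linarith
    _ ↔ |r - ⟪u, h⟫| ≤ √(1 - ‖h‖ ^ 2 + ⟪u, h⟫ ^ 2) := by
      rw [Real.le_sqrt (abs_nonneg _) hrad_nonneg, sq_abs]
    _ ↔ r ≤ exitRadius h u := by
      rw [abs_le, exitRadius]
      constructor
      · rintro ⟨-, hupper⟩
        linarith
      · intro hupper
        constructor <;> linarith

lemma exitRadius_nonneg {h u : E} (hh : ‖h‖ ≤ 1) (hu : ‖u‖ = 1) : 0 ≤ exitRadius h u := by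
  simpa [hh] using norm_smul_sub_le_one_iff hh hu le_rfl

lemma norm_exitRadius_smul_sub {h u : E} (hh : ‖h‖ ≤ 1) (hu : ‖u‖ = 1) :
    ‖exitRadius h u • u - h‖ = 1 := by
  have hh_sq : ‖h‖ ^ 2 ≤ 1 := pow_le_one₀ (norm_nonneg h) hh
  rw [← pow_eq_one_iff_of_nonneg (norm_nonneg _) two_ne_zero, norm_smul_sub_sq hu, exitRadius,
    add_sub_cancel_left, Real.sq_sqrt (by nlinarith)]
  ring

lemma abs_exitRadius_sub_one_le {h u : E} (hh : ‖h‖ ≤ 1) (hu : ‖u‖ = 1) :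
    |exitRadius h u - 1| ≤ ‖h‖ := by
  have hnorm : ‖exitRadius h u • u‖ = exitRadius h u := by
    rw [norm_smul, hu, mul_one, Real.norm_of_nonneg (exitRadius_nonneg hh hu)]
  calc
    |exitRadius h u - 1| = |‖exitRadius h u • u‖ - ‖exitRadius h u • u - h‖| := by
      rw [hnorm, norm_exitRadius_smul_sub hh hu]
    _ ≤ ‖exitRadius h u • u - (exitRadius h u • u - h)‖ := abs_norm_sub_norm_le _ _
    _ = ‖h‖ := by rw [sub_sub_cancel]

lemma hasFDerivAt_exitRadius_zero (u : E) :
    HasFDerivAt (fun h ↦ exitRadius h u) (innerSL ℝ u) 0 := by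
  have hinner : HasFDerivAt (fun h : E ↦ ⟪u, h⟫) (innerSL ℝ u) 0 := (innerSL ℝ u).hasFDerivAt
  have hnorm : HasFDerivAt (fun h : E ↦ ‖h‖ ^ 2) (2 • innerSL ℝ 0) (0 : E) :=
    (hasStrictFDerivAt_norm_sq 0).hasFDerivAt
  have hsqrt := ((hnorm.const_sub 1).add (hinner.pow 2)).sqrt (by simp)
  refine (hinner.add hsqrt).congr_fderiv ?_
  ext v
  simp

lemma norm_intervalIntegral_exitRadius_sub_le {F : Type*} [NormedAddCommGroup F] [NormedSpace ℝ F]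
    {k : ℝ → F} (hk : Continuous k) {M : ℝ} (hM : ∀ r ∈ Icc (0 : ℝ) 2, ‖k r‖ ≤ M)
    {h u : E} (hh : ‖h‖ ≤ 1) (hu : ‖u‖ = 1) :
    ‖(∫ r in (0 : ℝ)..exitRadius h u, k r) - ∫ r in (0 : ℝ)..1, k r‖ ≤ M * ‖h‖ := by
  have hρ := abs_exitRadius_sub_one_le hh hu
  have hM_uIoc : ∀ r ∈ uIoc (1 : ℝ) (exitRadius h u), ‖k r‖ ≤ M := by
    intro r hr
    have hr_mem : r ∈ Icc (0 : ℝ) 2 := uIcc_subset_Icc (by norm_num)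
      ⟨exitRadius_nonneg hh hu, by linarith [(abs_le.1 hρ).2]⟩ (uIoc_subset_uIcc hr)
    exact hM r hr_mem
  have hM_nonneg : 0 ≤ M := (norm_nonneg _).trans (hM 0 (by norm_num))
  rw [intervalIntegral.integral_interval_sub_left (hk.intervalIntegrable _ _)
    (hk.intervalIntegrable _ _)]
  calc
    ‖∫ r in (1 : ℝ)..exitRadius h u, k r‖ ≤ M * |exitRadius h u - 1| :=
      intervalIntegral.norm_integral_le_of_norm_le_const hM_uIoc
    _ ≤ M * ‖h‖ := by gcongr

lemma hasFDerivAt_intervalIntegral_exitRadius_zero {k : ℝ → ℝ} (hk : Continuous k) (u : E) :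
    HasFDerivAt (fun h ↦ ∫ r in (0 : ℝ)..exitRadius h u, k r) (innerSL ℝ (k 1 • u)) 0 := by
  have hFTC : HasDerivAt (fun R ↦ ∫ r in (0 : ℝ)..R, k r) (k 1) (exitRadius 0 u) := by
    rw [exitRadius_zero_left]
    exact hk.integral_hasStrictDerivAt 0 1 |>.hasDerivAt
  rw [map_smul]
  exact hFTC.comp_hasFDerivAt 0 (hasFDerivAt_exitRadius_zero u)

end ExitRadius

section BallIntegral

variable {E : Type*} [NormedAddCommGroup E] [InnerProductSpace ℝ E] [FiniteDimensional ℝ E]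
  [MeasurableSpace E] [BorelSpace E]

lemma hasGradientAt_integral_intervalIntegral_exitRadius_zero (ν : Measure (sphere (0 : E) 1))
    [IsFiniteMeasure ν] {k : sphere (0 : E) 1 → ℝ → ℝ} (hk : Continuous k.uncurry) :
    HasGradientAt (fun h ↦ ∫ u, (∫ r in (0 : ℝ)..exitRadius h (u : E), k u r) ∂ν)
      (∫ u, k u 1 • (u : E) ∂ν) 0 := by
  have hk_ray (u : sphere (0 : E) 1) : Continuous (k u) := by fun_prop
  obtain ⟨M, hM⟩ : ∃ M, ∀ p ∈ (univ : Set (sphere (0 : E) 1)) ×ˢ Icc (0 : ℝ) 2,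
      ‖k.uncurry p‖ ≤ M :=
    (isCompact_univ.prod isCompact_Icc).exists_bound_of_continuousOn hk.continuousOn
  have hradial (h : E) :
      Continuous fun u : sphere (0 : E) 1 ↦ ∫ r in (0 : ℝ)..exitRadius h (u : E), k u r :=
    intervalIntegral.continuous_parametric_intervalIntegral_of_continuous hk
      ((continuous_exitRadius h).comp continuous_subtype_val)
  have hgrad : Continuous fun u : sphere (0 : E) 1 ↦ k u 1 • (u : E) := by fun_prop
  have hfderiv := hasFDerivAt_integral_of_dominated_loc_of_lip' (𝕜 := ℝ) (μ := ν)
    (F := fun h u ↦ ∫ r in (0 : ℝ)..exitRadius h (u : E), k u r)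
    (F' := fun u ↦ innerSL ℝ (k u 1 • (u : E))) (bound := fun _ ↦ M)
    (closedBall_mem_nhds (0 : E) one_pos)
    (fun h _ ↦ (hradial h).aestronglyMeasurable)
    ((hradial 0).integrable_of_hasCompactSupport (.of_compactSpace _))
    ((innerSL ℝ).continuous.comp hgrad).aestronglyMeasurable
    (.of_forall fun u h hh ↦ by
      simpa only [exitRadius_zero_left, sub_zero] using
        norm_intervalIntegral_exitRadius_sub_le (hk_ray u) (fun r hr ↦ hM (u, r) ⟨mem_univ u, hr⟩)
          (mem_closedBall_zero_iff.1 hh) (norm_eq_of_mem_sphere u))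
    (integrable_const M)
    (.of_forall fun u ↦ hasFDerivAt_intervalIntegral_exitRadius_zero (hk_ray u) (u : E))
  rw [hasGradientAt_iff_hasFDerivAt]
  exact hfderiv.2.congr_fderiv ((innerSL ℝ).integral_comp_comm
    (hgrad.integrable_of_hasCompactSupport (.of_compactSpace _)))

variable [Nontrivial E] (μ : Measure E) [μ.IsAddHaarMeasure]

lemma setIntegral_closedBall_eq_integral_exitRadius {F : Type*} [NormedAddCommGroup F]
    [NormedSpace ℝ F] {g : E → F} (hg : Continuous g) {h : E} (hh : ‖h‖ ≤ 1) :
    ∫ v in closedBall h 1, g v ∂μ =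
      ∫ u : sphere (0 : E) 1, (∫ r in (0 : ℝ)..exitRadius h (u : E),
        r ^ (Module.finrank ℝ E - 1) • g (r • (u : E))) ∂μ.toSphere := by
  refine setIntegral_eq_integral_toSphere_intervalIntegral μ measurableSet_closedBall
    (fun u ↦ exitRadius_nonneg hh (norm_eq_of_mem_sphere u)) (fun u r hr ↦ ?_)
    (hg.continuousOn.integrableOn_compact (isCompact_closedBall h 1))
  rw [mem_closedBall_iff_norm, norm_smul_sub_le_one_iff hh (norm_eq_of_mem_sphere u) hr.le]

lemma hasGradientAt_setIntegral_closedBall {g : E → ℝ} (hg : Continuous g) :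
    HasGradientAt (fun h ↦ ∫ v in closedBall h 1, g v ∂μ)
      (∫ u : sphere (0 : E) 1, g u • (u : E) ∂μ.toSphere) 0 := by
  have hpolar : (fun h ↦ ∫ v in closedBall h 1, g v ∂μ) =ᶠ[𝓝 0] fun h ↦
      ∫ u : sphere (0 : E) 1, (∫ r in (0 : ℝ)..exitRadius h (u : E),
        r ^ (Module.finrank ℝ E - 1) • g (r • (u : E))) ∂μ.toSphere := by
    filter_upwards [closedBall_mem_nhds (0 : E) one_pos] with h hh
    exact setIntegral_closedBall_eq_integral_exitRadius μ hg (mem_closedBall_zero_iff.1 hh)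
  have hgrad := hasGradientAt_integral_intervalIntegral_exitRadius_zero μ.toSphere
    (k := fun u r ↦ r ^ (Module.finrank ℝ E - 1) • g (r • (u : E))) (by fun_prop)
  simp only [one_pow, one_smul] at hgrad
  exact hgrad.congr_of_eventuallyEq hpolar

end BallIntegral

section Gradient

variable {H : Type*} [NormedAddCommGroup H] [InnerProductSpace ℝ H] [CompleteSpace H]
  {φ : H → ℝ} {φ' : H}

lemma hasGradientAt_const_mul {x : H} (c : ℝ) (hφ : HasGradientAt φ φ' x) :
    HasGradientAt (fun y ↦ c * φ y) (c • φ') x := by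
  rw [hasGradientAt_iff_hasFDerivAt] at hφ ⊢
  exact (hφ.const_mul c).congr_fderiv (map_smul _ c φ').symm

lemma hasGradientAt_comp_smul_sub (c : ℝ) (w : H) (hφ : HasGradientAt φ φ' 0) :
    HasGradientAt (fun x ↦ φ (c • (x - w))) (c • φ') w := by
  have haffine : HasFDerivAt (fun x ↦ c • (x - w)) (c • ContinuousLinearMap.id ℝ H) w :=
    ((hasFDerivAt_id w).sub_const w).const_smul c
  have hφ_at : HasFDerivAt φ (InnerProductSpace.toDual ℝ H φ') (c • (w - w)) := by
    simpa using hφ.hasFDerivAt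
  rw [hasGradientAt_iff_hasFDerivAt]
  refine (hφ_at.comp w haffine).congr_fderiv ?_
  ext v
  simp

end Gradient

section Averages

variable {E F : Type*} [NormedAddCommGroup E] [MeasurableSpace E] [BorelSpace E]
  [NormedAddCommGroup F] [NormedSpace ℝ F] (μ : Measure E)

lemma setIntegral_closedBall_comp_add_left [μ.IsAddLeftInvariant] (g : E → F) (h c : E) (R : ℝ) :
    ∫ v in closedBall c R, g (h + v) ∂μ = ∫ v in closedBall (h + c) R, g v ∂μ := by
  rw [← (measurePreserving_add_left μ h).setIntegral_preimage_emb (measurableEmbedding_addLeft h) g,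
    preimage_add_closedBall, add_sub_cancel_left]

variable [NormedSpace ℝ E]

lemma setAverage_closedBall_comp_add_smul [μ.IsAddLeftInvariant] (f : E → F) {δ : ℝ} (hδ : δ ≠ 0)
    (w x : E) :
    ⨍ v in closedBall 0 1, f (x + δ • v) ∂μ = (μ.real (closedBall 0 1))⁻¹ •
      ∫ v in closedBall (δ⁻¹ • (x - w)) 1, f (w + δ • v) ∂μ := by
  have hrescale (v : E) : x + δ • v = w + δ • (δ⁻¹ • (x - w) + v) := by
    rw [smul_add, smul_inv_smul₀ hδ, ← add_assoc, add_sub_cancel]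
  simp only [setAverage_eq, hrescale]
  rw [setIntegral_closedBall_comp_add_left μ (fun v ↦ f (w + δ • v)), add_zero]

lemma finrank_smul_average_toSphere [Nontrivial E] [FiniteDimensional ℝ E] [μ.IsAddHaarMeasure]
    (k : sphere (0 : E) 1 → F) :
    (Module.finrank ℝ E : ℝ) • ⨍ u, k u ∂μ.toSphere =
      (μ.real (closedBall 0 1))⁻¹ • ∫ u, k u ∂μ.toSphere := by
  have hfinrank : (Module.finrank ℝ E : ℝ) ≠ 0 := Nat.cast_ne_zero.2 Module.finrank_pos.ne'
  rw [average_eq, Measure.toSphere_real_apply_univ, smul_smul, mul_inv,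
    mul_inv_cancel_left₀ hfinrank, Measure.addHaar_real_closedBall_eq_addHaar_real_ball]

lemma integral_ballUniform {d : ℕ} (k : EuclideanSpace ℝ (Fin d) → F) :
    ∫ v, k v ∂(ballUniform d) = ⨍ v in closedBall 0 1, k v := by
  rw [setAverage_eq', ballUniform]

lemma integral_sphereUniform {d : ℕ} (k : EuclideanSpace ℝ (Fin d) → F) :
    ∫ u, k u ∂(sphereUniform d) = ⨍ u : sphere (0 : EuclideanSpace ℝ (Fin d)) 1, k u
      ∂(volume : Measure (EuclideanSpace ℝ (Fin d))).toSphere := by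
  rw [sphereUniform, integral_smul_measure,
    (MeasurableEmbedding.subtype_coe isClosed_sphere.measurableSet).integral_map, average_eq',
    integral_smul_measure]

end Averages

theorem gradient_of_ball_smoothed_general {E : Type*} [NormedAddCommGroup E] [InnerProductSpace ℝ E]
    [FiniteDimensional ℝ E] [Nontrivial E] [MeasurableSpace E] [BorelSpace E]
    (μ : Measure E) [μ.IsAddHaarMeasure] {f : E → ℝ} (hf : Continuous f)
    {δ : ℝ} (hδ : δ ≠ 0) (w : E) :
    HasGradientAt (fun x ↦ ⨍ v in closedBall 0 1, f (x + δ • v) ∂μ)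
      (((Module.finrank ℝ E : ℝ) / δ) •
        ⨍ u : sphere (0 : E) 1, f (w + δ • (u : E)) • (u : E) ∂μ.toSphere) w := by
  have hball := hasGradientAt_setIntegral_closedBall μ
    (g := fun v ↦ f (w + δ • v)) (by fun_prop)
  have hsmooth := hasGradientAt_const_mul (μ.real (closedBall 0 1))⁻¹
    (hasGradientAt_comp_smul_sub δ⁻¹ w hball)
  simp only [setAverage_closedBall_comp_add_smul μ f hδ w, smul_eq_mul]
  convert hsmooth using 1
  rw [div_eq_inv_mul, mul_smul, finrank_smul_average_toSphere, smul_comm]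

/-- Gradient of the ball-smoothed function, Flaxman–Kalai–McMahan.
If `f` is Lipschitz and `f̂ w = 𝔼_{v ∼ ball} f (w + δ v)`, then `f̂` is differentiable
everywhere with gradient `∇ f̂ (w) = (d / δ) • 𝔼_{u ∼ sphere} [f (w + δ u) • u]`. -/
theorem gradient_of_ball_smoothed
    (d : ℕ) (hd : 1 ≤ d)
    (f : EuclideanSpace ℝ (Fin d) → ℝ) (hf : ∃ K : NNReal, LipschitzWith K f)
    (δ : ℝ) (hδ : 0 < δ)
    (fhat : EuclideanSpace ℝ (Fin d) → ℝ)
    (hfhat : ∀ w, fhat w = ∫ v, f (w + δ • v) ∂(ballUniform d)) :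
    ∀ w : EuclideanSpace ℝ (Fin d),
      HasGradientAt fhat
        (((d : ℝ) / δ) • ∫ u, f (w + δ • u) • u ∂(sphereUniform d)) w := by
  intro w
  obtain ⟨K, hK⟩ := hf
  have : Nonempty (Fin d) := ⟨⟨0, hd⟩⟩
  obtain rfl := funext hfhat
  simpa only [integral_ballUniform, integral_sphereUniform,
    finrank_euclideanSpace_fin] using
    gradient_of_ball_smoothed_general volume hK.continuous hδ.ne' w
end

section
/- Projected online gradient descent with unbiased bounded stochastic gradients: let 𝕎 ⊆ ℝ^d be a nonempty compact convex set with ‖w‖ ≤ W for all w ∈ 𝕎 (W > 0), let f_1,…,f_T : ℝ^d → ℝ be convex differentiable functions, and let G > 0. On a probability space, let w_1 ∈ 𝕎 be deterministic, let g_1,…,g_T be random vectors with ‖g_t‖ ≤ G almost surely and E[g_t | g_1,…,g_{t−1}] = ∇f_t(w_t) almost surely for each t, and set w_{t+1} = proj_𝕎(w_t − η g_t) with fixed step size η = 2W/(G√T). Then for every w* ∈ 𝕎, E[Σ_{t=1}^T f_t(w_t)] − Σ_{t=1}^T f_t(w*) ≤ 2 W G √T. -/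
open MeasureTheory Metric Finset

/-!
Nonexpansiveness of the projection gives, for every comparator `v ∈ 𝕎`, the one-step inequality
`‖w (t+1) - v‖² ≤ ‖w t - v‖² - 2η⟪w t - v, g t⟫ + η²‖g t‖²`. Summing over `t` telescopes, so
pathwise `∑ ⟪w t - v, g t⟫ ≤ D²/(2η) + ηTG²/2` with `D = 2W`, and `η = D/(G√T)` balances the two
terms. Since `w t` is measurable with respect to the past, the noise can be conditioned away:
`𝔼⟪w t - v, g t⟫ = 𝔼⟪w t - v, ∇(f t)(w t)⟫`, which convexity bounds below by
`𝔼[f t (w t)] - f t v`.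
-/

open scoped RealInnerProductSpace

theorem hasFDerivAt_apply_sub_le_of_convexOn {E : Type*} [NormedAddCommGroup E] [NormedSpace ℝ E]
    {s : Set E} {f : E → ℝ} {f' : E →L[ℝ] ℝ} {x y : E} (hf : ConvexOn ℝ s f) (hx : x ∈ s)
    (hy : y ∈ s) (hf' : HasFDerivAt f f' x) : f' (y - x) ≤ f y - f x := by
  let ℓ : ℝ →ᵃ[ℝ] E := AffineMap.lineMap x y
  have hℓ0 : ℓ 0 = x := AffineMap.lineMap_apply_zero x y
  have hℓ1 : ℓ 1 = y := AffineMap.lineMap_apply_one x y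
  have hderiv : HasDerivAt (f ∘ ℓ) (f' (y - x)) 0 :=
    HasFDerivAt.comp_hasDerivAt 0 (hℓ0.symm ▸ hf') AffineMap.hasDerivAt_lineMap
  have hslope := (hf.comp_affineMap ℓ).le_slope_of_hasDerivAt
    (by simpa [hℓ0] using hx) (by simpa [hℓ1] using hy) one_pos hderiv
  simpa [slope_def_field, hℓ0, hℓ1] using hslope

theorem sub_le_inner_gradient_of_convexOn {E : Type*} [NormedAddCommGroup E]
    [InnerProductSpace ℝ E] [CompleteSpace E] {s : Set E} {f : E → ℝ} {x y : E}
    (hf : ConvexOn ℝ s f) (hx : x ∈ s) (hy : y ∈ s) (hdiff : DifferentiableAt ℝ f x) :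
    f x - f y ≤ ⟪x - y, gradient f x⟫ := by
  have h := hasFDerivAt_apply_sub_le_of_convexOn hf hx hy hdiff.hasGradientAt.hasFDerivAt
  rw [InnerProductSpace.toDual_apply_apply, ← neg_sub x y, inner_neg_right, real_inner_comm] at h
  linarith

/-- `p` is a metric projection onto `K`: it sends every point to a closest point of `K`. Being a
predicate on maps, it presupposes neither existence nor uniqueness of closest points. -/
structure IsMetricProjection {X : Type*} [PseudoMetricSpace X] (K : Set X) (p : X → X) : Prop where
  mem : ∀ z, p z ∈ K
  dist_le : ∀ z, ∀ v ∈ K, dist (p z) z ≤ dist v z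

namespace IsMetricProjection

theorem apply_of_mem {X : Type*} [MetricSpace X] {K : Set X} {p : X → X}
    (hp : IsMetricProjection K p) {v : X} (hv : v ∈ K) : p v = v :=
  dist_le_zero.1 ((hp.dist_le v v hv).trans_eq (dist_self v))

variable {E : Type*} [NormedAddCommGroup E] [InnerProductSpace ℝ E] {K : Set E} {p : E → E}

theorem inner_sub_sub_nonpos (hp : IsMetricProjection K p) (hK : Convex ℝ K) (z : E) {v : E}
    (hv : v ∈ K) : ⟪z - p z, v - p z⟫ ≤ 0 := by
  refine (norm_eq_iInf_iff_real_inner_le_zero hK (hp.mem z)).1 ?_ v hv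
  have : Nonempty K := ⟨⟨_, hp.mem z⟩⟩
  refine le_antisymm (le_ciInf fun u => ?_)
    (ciInf_le (f := fun u : K => ‖z - u‖) ⟨0, Set.forall_mem_range.2 fun _ => norm_nonneg _⟩
      ⟨_, hp.mem z⟩)
  simpa only [dist_eq_norm, norm_sub_rev] using hp.dist_le z u u.2

theorem lipschitzWith_one (hp : IsMetricProjection K p) (hK : Convex ℝ K) :
    LipschitzWith 1 p := by
  refine LipschitzWith.of_dist_le_mul fun a b => ?_
  rw [NNReal.coe_one, one_mul, dist_eq_norm, dist_eq_norm]
  have ha : ⟪a - p a, p b - p a⟫ ≤ 0 := hp.inner_sub_sub_nonpos hK a (hp.mem b)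
  have hb : ⟪b - p b, p a - p b⟫ ≤ 0 := hp.inner_sub_sub_nonpos hK b (hp.mem a)
  have hmul : ‖p a - p b‖ * ‖p a - p b‖ ≤ ‖a - b‖ * ‖p a - p b‖ := calc
    ‖p a - p b‖ * ‖p a - p b‖ = ⟪p a - p b, p a - p b⟫ :=
      (real_inner_self_eq_norm_mul_norm _).symm
    _ ≤ ⟪a - b, p a - p b⟫ := by
      simp only [inner_sub_left, inner_sub_right] at ha hb ⊢
      linarith
    _ ≤ ‖a - b‖ * ‖p a - p b‖ := real_inner_le_norm _ _
  by_contra! hlt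
  exact hmul.not_gt (mul_lt_mul_of_pos_right hlt ((norm_nonneg _).trans_lt hlt))

theorem norm_apply_sub_le (hp : IsMetricProjection K p) (hK : Convex ℝ K) (z : E) {v : E}
    (hv : v ∈ K) : ‖p z - v‖ ≤ ‖z - v‖ := by
  simpa [hp.apply_of_mem hv, dist_eq_norm] using (hp.lipschitzWith_one hK).dist_le_mul z v

theorem norm_apply_sub_smul_sub_sq_le (hp : IsMetricProjection K p) (hK : Convex ℝ K) {v : E}
    (hv : v ∈ K) (x g : E) (η : ℝ) :
    ‖p (x - η • g) - v‖ ^ 2 ≤ ‖x - v‖ ^ 2 - 2 * η * ⟪x - v, g⟫ + η ^ 2 * ‖g‖ ^ 2 := calc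
  ‖p (x - η • g) - v‖ ^ 2 ≤ ‖x - η • g - v‖ ^ 2 := by
    gcongr
    exact hp.norm_apply_sub_le hK _ hv
  _ = ‖x - v‖ ^ 2 - 2 * η * ⟪x - v, g⟫ + η ^ 2 * ‖g‖ ^ 2 := by
    rw [sub_right_comm, norm_sub_sq_real, inner_smul_right, norm_smul, mul_pow, Real.norm_eq_abs,
      sq_abs, mul_assoc]

end IsMetricProjection

/-- `x 1, …, x (T + 1)` are the iterates of projected gradient descent with projection map `p`, step
size `η` and descent directions `g 1, …, g T`. The value `x 0` is irrelevant. -/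
def IsProjectedDescent {E : Type*} [AddCommGroup E] [Module ℝ E] (p : E → E) (η : ℝ) (T : ℕ)
    (x g : ℕ → E) : Prop :=
  ∀ t ∈ Icc 1 T, x (t + 1) = p (x t - η • g t)

namespace IsProjectedDescent

section Module

variable {E : Type*} [AddCommGroup E] [Module ℝ E] {p : E → E} {η : ℝ} {T : ℕ} {x g : ℕ → E}

theorem mono (hx : IsProjectedDescent p η T x g) {S : ℕ} (hST : S ≤ T) :
    IsProjectedDescent p η S x g :=
  fun t ht => hx t (Icc_subset_Icc_right hST ht)

theorem mem (hx : IsProjectedDescent p η T x g) {K : Set E} (hp : ∀ z, p z ∈ K) (hx1 : x 1 ∈ K)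
    {t : ℕ} (ht : t ∈ Icc 1 T) : x t ∈ K := by
  obtain ⟨n, rfl⟩ := Nat.exists_eq_add_of_le' (mem_Icc.1 ht).1
  rcases n with _ | n
  · exact hx1
  · rw [hx (n + 1) (mem_Icc.2 ⟨by omega, (Nat.le_succ _).trans (mem_Icc.1 ht).2⟩)]
    exact hp _

end Module

section InnerProductSpace

variable {E : Type*} [NormedAddCommGroup E] [InnerProductSpace ℝ E] {K : Set E} {p : E → E}
  {η : ℝ} {T : ℕ} {x g : ℕ → E}

theorem two_mul_sum_inner_le (hx : IsProjectedDescent p η T x g) (hp : IsMetricProjection K p)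
    (hK : Convex ℝ K) {v : E} (hv : v ∈ K) :
    2 * η * ∑ t ∈ Icc 1 T, ⟪x t - v, g t⟫ ≤
      ‖x 1 - v‖ ^ 2 + η ^ 2 * ∑ t ∈ Icc 1 T, ‖g t‖ ^ 2 := by
  have hstep : ∀ t ∈ Icc 1 T, ‖x (t + 1) - v‖ ^ 2 - ‖x t - v‖ ^ 2 ≤
      η ^ 2 * ‖g t‖ ^ 2 - 2 * η * ⟪x t - v, g t⟫ := fun t ht => by
    rw [hx t ht]
    linarith [hp.norm_apply_sub_smul_sub_sq_le hK hv (x t) (g t) η]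
  have htelescope : ∑ t ∈ Icc 1 T, (‖x (t + 1) - v‖ ^ 2 - ‖x t - v‖ ^ 2) =
      ‖x (T + 1) - v‖ ^ 2 - ‖x 1 - v‖ ^ 2 := by
    rw [← Ico_add_one_right_eq_Icc, sum_Ico_sub (fun t => ‖x t - v‖ ^ 2) (by omega)]
  have hsum := sum_le_sum hstep
  rw [htelescope, sum_sub_distrib, ← mul_sum, ← mul_sum] at hsum
  linarith [sq_nonneg ‖x (T + 1) - v‖]

theorem sum_inner_le_mul_sqrt (hx : IsProjectedDescent p η T x g) (hp : IsMetricProjection K p)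
    (hK : Convex ℝ K) {v : E} (hv : v ∈ K) {D G : ℝ} (hD : 0 < D) (hG : 0 < G) (hT : 1 ≤ T)
    (hη : η = D / (G * √T)) (hx1 : ‖x 1 - v‖ ≤ D) (hg : ∀ t ∈ Icc 1 T, ‖g t‖ ≤ G) :
    ∑ t ∈ Icc 1 T, ⟪x t - v, g t⟫ ≤ D * G * √T := by
  have hsqrt : 0 < √(T : ℝ) := Real.sqrt_pos.2 (by exact_mod_cast hT)
  have hη_pos : 0 < η := hη ▸ div_pos hD (mul_pos hG hsqrt)
  have hηD : η * (G * √T) = D := hη ▸ div_mul_cancel₀ D (mul_pos hG hsqrt).ne'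
  have hgsq : ∑ t ∈ Icc 1 T, ‖g t‖ ^ 2 ≤ T * G ^ 2 := by
    simpa using sum_le_card_nsmul (Icc 1 T) (fun t => ‖g t‖ ^ 2) (G ^ 2)
      fun t ht => by gcongr; exact hg t ht
  refine le_of_mul_le_mul_left ?_ (show 0 < 2 * η by positivity)
  calc 2 * η * ∑ t ∈ Icc 1 T, ⟪x t - v, g t⟫
      ≤ ‖x 1 - v‖ ^ 2 + η ^ 2 * ∑ t ∈ Icc 1 T, ‖g t‖ ^ 2 := hx.two_mul_sum_inner_le hp hK hv
    _ ≤ D ^ 2 + η ^ 2 * (T * G ^ 2) := by gcongr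
    _ = D ^ 2 + (η * (G * √T)) ^ 2 := by rw [mul_pow, mul_pow, Real.sq_sqrt T.cast_nonneg]; ring
    _ = 2 * η * (D * G * √T) := by rw [hηD]; linear_combination (-2 * D) * hηD

end InnerProductSpace

theorem stronglyMeasurable {Ω E : Type*} {m : MeasurableSpace Ω} [NormedAddCommGroup E]
    [NormedSpace ℝ E] {p : E → E} {η : ℝ} {T : ℕ} {x g : ℕ → Ω → E}
    (hx : ∀ ω, IsProjectedDescent p η T (x · ω) (g · ω)) (hp : Continuous p)
    (hx1 : StronglyMeasurable (x 1)) (hg : ∀ t ∈ Icc 1 T, StronglyMeasurable (g t)) :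
    StronglyMeasurable (x (T + 1)) := by
  induction T with
  | zero => exact hx1
  | succ n ih =>
    have hxn : StronglyMeasurable (x (n + 1)) := ih (fun ω => (hx ω).mono n.le_succ)
      fun t ht => hg t (Icc_subset_Icc_right n.le_succ ht)
    have hlast : n + 1 ∈ Icc 1 (n + 1) := right_mem_Icc.2 (by omega)
    have hrec : x (n + 1 + 1) = fun ω => p (x (n + 1) ω - η • g (n + 1) ω) :=
      funext fun ω => hx ω (n + 1) hlast
    rw [hrec]
    exact hp.comp_stronglyMeasurable (hxn.sub ((hg _ hlast).const_smul η))

end IsProjectedDescent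

theorem integrable_inner_sub_of_isBounded {Ω E : Type*} {_ : MeasurableSpace Ω} {μ : Measure Ω}
    [NormedAddCommGroup E] [InnerProductSpace ℝ E] {K : Set E} (hK : Bornology.IsBounded K)
    {u h : Ω → E} (hu : StronglyMeasurable u) (huK : ∀ ω, u ω ∈ K) {v : E} (hv : v ∈ K)
    (hh : Integrable h μ) : Integrable (fun ω => ⟪u ω - v, h ω⟫) μ :=
  (innerSL ℝ).integrable_of_bilin_of_bdd_left (diam K)
    (hu.sub stronglyMeasurable_const).aestronglyMeasurable
    (ae_of_all _ fun ω => dist_eq_norm (u ω) v ▸ dist_le_diam_of_mem hK (huK ω) hv) hh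

theorem integral_inner_condExp_of_bound {Ω E : Type*} {m mΩ : MeasurableSpace Ω} {μ : Measure Ω}
    [IsFiniteMeasure μ] [NormedAddCommGroup E] [InnerProductSpace ℝ E] [CompleteSpace E]
    (hm : m ≤ mΩ) {u g : Ω → E} (hu : StronglyMeasurable[m] u) {C : ℝ}
    (hC : ∀ᵐ ω ∂μ, ‖u ω‖ ≤ C) (hg : Integrable g μ) :
    ∫ ω, ⟪u ω, μ[g | m] ω⟫ ∂μ = ∫ ω, ⟪u ω, g ω⟫ ∂μ := by
  rw [← integral_condExp hm (f := fun ω => ⟪u ω, g ω⟫)]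
  exact integral_congr_ae
    (condExp_stronglyMeasurable_bilin_of_bound (innerSL ℝ) hm hu hg C hC).symm

theorem stronglyMeasurable_comp_of_continuousOn {Ω X Y : Type*} {_ : MeasurableSpace Ω}
    [TopologicalSpace X] [TopologicalSpace.PseudoMetrizableSpace X] [TopologicalSpace Y]
    {K : Set X} {f : X → Y} (hf : ContinuousOn f K) {u : Ω → X} (hu : StronglyMeasurable u)
    (huK : ∀ ω, u ω ∈ K) : StronglyMeasurable fun ω => f (u ω) :=
  hf.domRestrict.comp_stronglyMeasurable (f := fun ω => (⟨u ω, huK ω⟩ : K)) <|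
    (Embedding.comp_stronglyMeasurable_iff .subtypeVal).1 hu

section StochasticGradient

variable {Ω E : Type*} {m mΩ : MeasurableSpace Ω} {μ : Measure Ω} [NormedAddCommGroup E]
  [InnerProductSpace ℝ E] [CompleteSpace E] {K : Set E} {f : E → ℝ} {u g : Ω → E}

theorem integrable_comp_of_condExp_eq_gradient [IsFiniteMeasure μ] (hm : m ≤ mΩ)
    (hK : Bornology.IsBounded K) (hf : ConvexOn ℝ K f) (hdiff : ∀ x ∈ K, DifferentiableAt ℝ f x)
    (hu : StronglyMeasurable[m] u) (huK : ∀ ω, u ω ∈ K)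
    (hgrad : μ[g | m] =ᵐ[μ] fun ω => gradient f (u ω)) :
    Integrable (fun ω => f (u ω)) μ := by
  rcases isEmpty_or_nonempty Ω with _ | ⟨⟨ω₀⟩⟩
  · exact .of_isEmpty
  let v := u ω₀
  have hv : v ∈ K := huK ω₀
  have hcont : ContinuousOn f K := fun x hx => (hdiff x hx).continuousAt.continuousWithinAt
  have hfu : StronglyMeasurable fun ω => f (u ω) :=
    stronglyMeasurable_comp_of_continuousOn hcont (hu.mono hm) huK
  have hlower : Integrable (fun ω => f v + ⟪u ω - v, gradient f v⟫) μ :=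
    (integrable_const _).add
      (integrable_inner_sub_of_isBounded hK (hu.mono hm) huK hv (integrable_const _))
  have hupper : Integrable (fun ω => f v + ⟪u ω - v, μ[g | m] ω⟫) μ :=
    (integrable_const _).add
      (integrable_inner_sub_of_isBounded hK (hu.mono hm) huK hv integrable_condExp)
  refine integrable_of_le_of_le hfu.aestronglyMeasurable (ae_of_all _ fun ω => ?_) ?_ hlower hupper
  · have hconv := sub_le_inner_gradient_of_convexOn hf hv (huK ω) (hdiff v hv)
    rw [← neg_sub (u ω) v, inner_neg_left] at hconv
    linarith
  · filter_upwards [hgrad] with ω hω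
    rw [hω]
    linarith [sub_le_inner_gradient_of_convexOn hf (huK ω) hv (hdiff _ (huK ω))]

theorem integral_comp_sub_le_integral_inner [IsProbabilityMeasure μ] (hm : m ≤ mΩ)
    (hK : Bornology.IsBounded K) (hf : ConvexOn ℝ K f) (hdiff : ∀ x ∈ K, DifferentiableAt ℝ f x)
    (hu : StronglyMeasurable[m] u) (huK : ∀ ω, u ω ∈ K) (hg : Integrable g μ)
    (hgrad : μ[g | m] =ᵐ[μ] fun ω => gradient f (u ω)) {v : E} (hv : v ∈ K) :
    ∫ ω, f (u ω) ∂μ - f v ≤ ∫ ω, ⟪u ω - v, g ω⟫ ∂μ := by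
  have hdiam : ∀ᵐ ω ∂μ, ‖u ω - v‖ ≤ diam K :=
    ae_of_all _ fun ω => dist_eq_norm (u ω) v ▸ dist_le_diam_of_mem hK (huK ω) hv
  have hfu : Integrable (fun ω => f (u ω)) μ :=
    integrable_comp_of_condExp_eq_gradient hm hK hf hdiff hu huK hgrad
  calc ∫ ω, f (u ω) ∂μ - f v = ∫ ω, (f (u ω) - f v) ∂μ := by
        rw [integral_sub hfu (integrable_const _), integral_const, probReal_univ, one_smul]
    _ ≤ ∫ ω, ⟪u ω - v, μ[g | m] ω⟫ ∂μ := by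
        refine integral_mono_ae (hfu.sub (integrable_const _))
          (integrable_inner_sub_of_isBounded hK (hu.mono hm) huK hv integrable_condExp) ?_
        filter_upwards [hgrad] with ω hω
        rw [hω]
        exact sub_le_inner_gradient_of_convexOn hf (huK ω) hv (hdiff _ (huK ω))
    _ = ∫ ω, ⟪u ω - v, g ω⟫ ∂μ :=
        integral_inner_condExp_of_bound hm (hu.sub stronglyMeasurable_const) hdiam hg

theorem integral_regret_le_of_sum_inner_le [IsProbabilityMeasure μ] {ι : Type*} {s : Finset ι}
    {m : ι → MeasurableSpace Ω} (hm : ∀ t ∈ s, m t ≤ mΩ) (hK : Bornology.IsBounded K)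
    {f : ι → E → ℝ} (hf : ∀ t ∈ s, ConvexOn ℝ K (f t))
    (hdiff : ∀ t ∈ s, ∀ x ∈ K, DifferentiableAt ℝ (f t) x) {w g : ι → Ω → E}
    (hw : ∀ t ∈ s, StronglyMeasurable[m t] (w t)) (hwK : ∀ t ∈ s, ∀ ω, w t ω ∈ K)
    (hg : ∀ t ∈ s, Integrable (g t) μ)
    (hgrad : ∀ t ∈ s, μ[g t | m t] =ᵐ[μ] fun ω => gradient (f t) (w t ω)) {v : E} (hv : v ∈ K)
    {R : ℝ} (hR : ∀ᵐ ω ∂μ, ∑ t ∈ s, ⟪w t ω - v, g t ω⟫ ≤ R) :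
    ∫ ω, ∑ t ∈ s, f t (w t ω) ∂μ - ∑ t ∈ s, f t v ≤ R := by
  have hinner : ∀ t ∈ s, Integrable (fun ω => ⟪w t ω - v, g t ω⟫) μ := fun t ht =>
    integrable_inner_sub_of_isBounded hK ((hw t ht).mono (hm t ht)) (hwK t ht) hv (hg t ht)
  calc ∫ ω, ∑ t ∈ s, f t (w t ω) ∂μ - ∑ t ∈ s, f t v
      = ∑ t ∈ s, (∫ ω, f t (w t ω) ∂μ - f t v) := by
        rw [integral_finsetSum _ fun t ht => integrable_comp_of_condExp_eq_gradient (hm t ht) hK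
          (hf t ht) (hdiff t ht) (hw t ht) (hwK t ht) (hgrad t ht), sum_sub_distrib]
    _ ≤ ∑ t ∈ s, ∫ ω, ⟪w t ω - v, g t ω⟫ ∂μ := sum_le_sum fun t ht =>
        integral_comp_sub_le_integral_inner (hm t ht) hK (hf t ht) (hdiff t ht) (hw t ht)
          (hwK t ht) (hg t ht) (hgrad t ht) hv
    _ = ∫ ω, ∑ t ∈ s, ⟪w t ω - v, g t ω⟫ ∂μ := (integral_finsetSum _ hinner).symm
    _ ≤ ∫ _, R ∂μ := integral_mono_ae (integrable_finsetSum _ hinner) (integrable_const R) hR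
    _ = R := by rw [integral_const, probReal_univ, one_smul]

end StochasticGradient

/-- The σ-algebra `σ(g 1, …, g (t - 1))` of the past of the sequence `g` before time `t`; indices
start at `1`, so it is trivial for `t ≤ 1`. -/
abbrev pastSigmaAlgebra {Ω E : Type*} [MeasurableSpace E] (g : ℕ → Ω → E) (t : ℕ) :
    MeasurableSpace Ω :=
  MeasurableSpace.comap (fun ω => fun s : Fin (t - 1) => g ((s : ℕ) + 1) ω) inferInstance

section PastSigmaAlgebra

variable {Ω E : Type*} [MeasurableSpace E] {g : ℕ → Ω → E} {t : ℕ}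

theorem pastSigmaAlgebra_le [mΩ : MeasurableSpace Ω] (hg : ∀ s ∈ Icc 1 (t - 1), Measurable (g s)) :
    pastSigmaAlgebra g t ≤ mΩ :=
  Measurable.comap_le <| measurable_pi_lambda _ fun s => hg _ (mem_Icc.2 ⟨by omega, s.isLt⟩)

theorem measurable_pastSigmaAlgebra {s : ℕ} (hs : s ∈ Icc 1 (t - 1)) :
    Measurable[pastSigmaAlgebra g t] (g s) := by
  obtain ⟨i, rfl⟩ := Nat.exists_eq_add_of_le' (mem_Icc.1 hs).1
  exact (measurable_pi_apply (X := fun _ => E) (⟨i, (mem_Icc.1 hs).2⟩ : Fin (t - 1))).comp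
    (comap_measurable _)

end PastSigmaAlgebra

theorem IsProjectedDescent.stronglyMeasurable_pastSigmaAlgebra {Ω E : Type*} [NormedAddCommGroup E]
    [NormedSpace ℝ E] [MeasurableSpace E] [OpensMeasurableSpace E] [SecondCountableTopology E]
    {p : E → E} {η : ℝ} {T : ℕ} {x g : ℕ → Ω → E}
    (hx : ∀ ω, IsProjectedDescent p η T (x · ω) (g · ω)) (hp : Continuous p) {x₁ : E}
    (hx1 : x 1 = fun _ => x₁) {t : ℕ} (ht : t ∈ Icc 1 T) :
    StronglyMeasurable[pastSigmaAlgebra g t] (x t) := by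
  obtain ⟨n, rfl⟩ := Nat.exists_eq_add_of_le' (mem_Icc.1 ht).1
  exact IsProjectedDescent.stronglyMeasurable
    (fun ω => (hx ω).mono (n.le_succ.trans (mem_Icc.1 ht).2)) hp
    (hx1 ▸ stronglyMeasurable_const)
    fun s hs => (measurable_pastSigmaAlgebra hs).stronglyMeasurable

theorem projected_ogd_stochastic_gradients_general {E : Type*} [NormedAddCommGroup E]
    [InnerProductSpace ℝ E] [CompleteSpace E] [MeasurableSpace E] [OpensMeasurableSpace E]
    [SecondCountableTopology E] {T : ℕ} (hT : 1 ≤ T) {𝕎 : Set E} {W : ℝ} (hW : 0 < W)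
    (h𝕎bdd : ∀ w ∈ 𝕎, ‖w‖ ≤ W) {f : ℕ → E → ℝ}
    (hconv : ∀ t ∈ Icc 1 T, ConvexOn ℝ 𝕎 (f t))
    (hdiff : ∀ t ∈ Icc 1 T, ∀ x ∈ 𝕎, DifferentiableAt ℝ (f t) x)
    {G : ℝ} (hG : 0 < G) {proj : E → E} (hproj : IsMetricProjection 𝕎 proj)
    {Ω : Type*} [mΩ : MeasurableSpace Ω] {μ : Measure Ω} [IsProbabilityMeasure μ] {g : ℕ → Ω → E}
    (hgmeas : ∀ t ∈ Icc 1 T, Measurable (g t)) (hgbdd : ∀ t ∈ Icc 1 T, ∀ᵐ ω ∂μ, ‖g t ω‖ ≤ G)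
    {η : ℝ} (hη : η = 2 * W / (G * √T)) {w : ℕ → Ω → E} {w₁ : E} (hw1mem : w₁ ∈ 𝕎)
    (hwinit : w 1 = fun _ => w₁)
    (hwrec : ∀ ω, IsProjectedDescent proj η T (w · ω) (g · ω))
    (hgunbiased : ∀ t ∈ Icc 1 T,
      μ[g t | pastSigmaAlgebra g t] =ᵐ[μ] fun ω => gradient (f t) (w t ω))
    {wstar : E} (hwstar : wstar ∈ 𝕎) :
    ∫ ω, ∑ t ∈ Icc 1 T, f t (w t ω) ∂μ - ∑ t ∈ Icc 1 T, f t wstar ≤ 2 * W * G * √T := by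
  have h𝕎cvx : Convex ℝ 𝕎 := (hconv 1 (left_mem_Icc.2 hT)).1
  have hw1 : ∀ ω, w 1 ω ∈ 𝕎 := fun ω => by rwa [hwinit]
  have hdist : ∀ ω, ‖w 1 ω - wstar‖ ≤ 2 * W := fun ω => by
    linarith [norm_sub_le (w 1 ω) wstar, h𝕎bdd _ (hw1 ω), h𝕎bdd _ hwstar]
  have hpast : ∀ t ∈ Icc 1 T, pastSigmaAlgebra g t ≤ mΩ := fun t ht =>
    pastSigmaAlgebra_le fun s hs =>
      hgmeas s (Icc_subset_Icc_right ((Nat.sub_le t 1).trans (mem_Icc.1 ht).2) hs)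
  have hwmeas : ∀ t ∈ Icc 1 T, StronglyMeasurable[pastSigmaAlgebra g t] (w t) := fun t ht =>
    IsProjectedDescent.stronglyMeasurable_pastSigmaAlgebra hwrec
      (hproj.lipschitzWith_one h𝕎cvx).continuous hwinit ht
  have hgint : ∀ t ∈ Icc 1 T, Integrable (g t) μ := fun t ht =>
    .of_bound (hgmeas t ht).aestronglyMeasurable G (hgbdd t ht)
  have hpath : ∀ᵐ ω ∂μ, ∑ t ∈ Icc 1 T, ⟪w t ω - wstar, g t ω⟫ ≤ 2 * W * G * √T := by
    filter_upwards [(ae_ball_iff (Icc 1 T).countable_toSet).2 hgbdd] with ω hω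
    exact (hwrec ω).sum_inner_le_mul_sqrt hproj h𝕎cvx hwstar (by positivity) hG hT hη (hdist ω) hω
  exact integral_regret_le_of_sum_inner_le hpast (isBounded_iff_forall_norm_le.2 ⟨W, h𝕎bdd⟩)
    hconv hdiff hwmeas (fun t ht ω => (hwrec ω).mem hproj.mem (hw1 ω) ht) hgint hgunbiased
    hwstar hpath

/-- Projected online gradient descent with unbiased bounded
stochastic gradients. If `‖g t‖ ≤ G` a.s., `𝔼[g t | g 1, …, g (t-1)] = ∇ (f t) (w t)`
a.s., and `w (t+1) = proj (w t − η • g t)` with `η = 2W/(G√T)`, then for every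
`w* ∈ 𝕎`, `𝔼[Σ_{t=1}^T f t (w t)] − Σ_{t=1}^T f t w* ≤ 2 W G √T`. -/
theorem projected_ogd_stochastic_gradients
    (d T : ℕ) (hd : 1 ≤ d) (hT : 1 ≤ T)
    (𝕎 : Set (EuclideanSpace ℝ (Fin d)))
    (h𝕎ne : 𝕎.Nonempty) (h𝕎cpt : IsCompact 𝕎) (h𝕎cvx : Convex ℝ 𝕎)
    (W : ℝ) (hW : 0 < W) (h𝕎bdd : ∀ w ∈ 𝕎, ‖w‖ ≤ W)
    (f : ℕ → EuclideanSpace ℝ (Fin d) → ℝ)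
    (hconv : ∀ t, ConvexOn ℝ Set.univ (f t))
    (hdiff : ∀ t, Differentiable ℝ (f t))
    (G : ℝ) (hG : 0 < G)
    -- Euclidean projection onto 𝕎 (the unique closest point in 𝕎)
    (proj : EuclideanSpace ℝ (Fin d) → EuclideanSpace ℝ (Fin d))
    (hproj_mem : ∀ z, proj z ∈ 𝕎)
    (hproj_min : ∀ z, ∀ v ∈ 𝕎, dist (proj z) z ≤ dist v z)
    -- probability space and stochastic gradients
    {Ω : Type} [MeasurableSpace Ω] (μ : Measure Ω) [IsProbabilityMeasure μ]
    (g : ℕ → Ω → EuclideanSpace ℝ (Fin d))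
    (hgmeas : ∀ t, Measurable (g t))
    (hgbdd : ∀ t, ∀ᵐ ω ∂μ, ‖g t ω‖ ≤ G)
    -- step size and the iterates (each `w t` is a measurable function of
    -- `g 1, …, g (t-1)` via this recursion)
    (η : ℝ) (hη : η = 2 * W / (G * Real.sqrt T))
    (w : ℕ → Ω → EuclideanSpace ℝ (Fin d)) (w₁ : EuclideanSpace ℝ (Fin d))
    (hw1mem : w₁ ∈ 𝕎) (hwinit : w 1 = fun _ => w₁)
    (hwrec : ∀ t, w (t + 1) = fun ω => proj (w t ω - η • g t ω))
    -- unbiasedness: the conditional expectation of `g t` given the σ-algebra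
    -- generated by `g 1, …, g (t-1)` is the true gradient `∇ (f t) (w t)`
    (hgunbiased : ∀ t,
      μ[g t | MeasurableSpace.comap
          (fun ω => fun s : Fin (t - 1) => g ((s : ℕ) + 1) ω) inferInstance]
        =ᵐ[μ] fun ω => gradient (f t) (w t ω))
    -- comparator
    (wstar : EuclideanSpace ℝ (Fin d)) (hwstar : wstar ∈ 𝕎) :
    (∫ ω, ∑ t ∈ Finset.Icc 1 T, f t (w t ω) ∂μ) - ∑ t ∈ Finset.Icc 1 T, f t wstar
      ≤ 2 * W * G * Real.sqrt T :=
  projected_ogd_stochastic_gradients_general hT hW h𝕎bdd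
    (fun t _ => (hconv t).subset (Set.subset_univ _) h𝕎cvx) (fun t _ x _ => hdiff t x) hG
    ⟨hproj_mem, hproj_min⟩ (fun t _ => hgmeas t) (fun t _ => hgbdd t) hη hw1mem hwinit
    (fun ω t _ => congrFun (hwrec t) ω) (fun t _ => hgunbiased t) hwstar
end

section
/- For the squared linear-regression loss, the spherical parameter-space gradient estimator is exactly unbiased for the true gradient: for any w, x ∈ ℝ^d, y ∈ ℝ, and δ > 0, (d/δ) · E_{u ∼ μ_S}[(⟨w + δ u, x⟩ − y)² · u] = 2 (⟨w, x⟩ − y) x = ∇_w (⟨w, x⟩ − y)². -/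
open MeasureTheory Metric RealInnerProductSpace

/-!
Averaging the integrand over `u` and `-u` cancels everything but the term
`2 (⟪w, x⟫ - y) δ ⟪u, x⟫ • u`, so only the second moments of `u` matter. Reflections act
transitively on the vectors of a given norm, so `𝔼 ⟪u, x⟫ ^ 2` depends only on `‖x‖`; summing it
over an orthonormal basis gives `d 𝔼 ⟪u, x⟫ ^ 2 = ‖x‖ ^ 2 𝔼 ‖u‖ ^ 2`, and polarization turns this
into `d 𝔼 [⟪u, x⟫ • u] = 𝔼 ‖u‖ ^ 2 • x`.
-/

open Module
open scoped Pointwise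

/-- Invariance of a measure under the whole orthogonal group, reflections included. This is the only
property of the uniform measure on the sphere, besides its moments, on which the estimator rests. -/
def IsOrthogonallyInvariant {E : Type*} [NormedAddCommGroup E] [InnerProductSpace ℝ E]
    [MeasurableSpace E] (μ : Measure E) : Prop :=
  ∀ g : E ≃ₗᵢ[ℝ] E, MeasurePreserving g μ μ

theorem hasGradientAt_inner_sub_sq {E : Type*} [NormedAddCommGroup E] [InnerProductSpace ℝ E]
    [CompleteSpace E] (w x : E) (y : ℝ) :
    HasGradientAt (fun v : E ↦ (⟪v, x⟫ - y) ^ 2) ((2 * (⟪w, x⟫ - y)) • x) w := by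
  rw [hasGradientAt_iff_hasFDerivAt]
  refine ((((hasFDerivAt_id (𝕜 := ℝ) w).inner ℝ
    (hasFDerivAt_const x w)).sub_const y).pow 2).congr_fderiv ?_
  ext v
  simp [real_inner_comm]

theorem integrable_sq_smul_of_memLp_three {α F : Type*} [MeasurableSpace α] {μ : Measure α}
    [NormedAddCommGroup F] [NormedSpace ℝ F] {f : α → ℝ} {g : α → F}
    (hf : MemLp f 3 μ) (hg : MemLp g 3 μ) : Integrable (fun a ↦ f a ^ 2 • g a) μ := by
  refine ((hf.integrable_norm_pow three_ne_zero).add (hg.integrable_norm_pow three_ne_zero)).mono'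
    ((hf.1.pow 2).smul hg.1) (.of_forall fun a ↦ ?_)
  have sq_mul_le (s t : ℝ) (hs : 0 ≤ s) (ht : 0 ≤ t) : s ^ 2 * t ≤ s ^ 3 + t ^ 3 := by
    nlinarith [mul_nonneg (add_nonneg hs ht) (sq_nonneg (s - t)), mul_nonneg hs (sq_nonneg t),
      pow_nonneg hs 3, pow_nonneg ht 3]
  simpa only [norm_smul, norm_pow, Pi.add_apply] using
    sq_mul_le ‖f a‖ ‖g a‖ (norm_nonneg _) (norm_nonneg _)

theorem two_smul_integral_eq_integral_add_comp_neg {G F : Type*} [AddGroup G] [MeasurableSpace G]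
    [MeasurableNeg G] [NormedAddCommGroup F] [NormedSpace ℝ F] {μ : Measure G} [μ.IsNegInvariant]
    {f : G → F} (hf : Integrable f μ) :
    (2 : ℝ) • ∫ u, f u ∂μ = ∫ u, (f u + f (-u)) ∂μ := by
  rw [integral_add hf hf.comp_neg, integral_neg_eq_self, two_smul]

theorem integral_inner_add_smul_sub_sq_smul {E : Type*} [NormedAddCommGroup E]
    [InnerProductSpace ℝ E] [MeasurableSpace E] [BorelSpace E] {μ : Measure E} [IsFiniteMeasure μ]
    [μ.IsNegInvariant] (hL3 : MemLp id 3 μ) (w x : E) (y δ : ℝ) :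
    ∫ u, (⟪w + δ • u, x⟫ - y) ^ 2 • u ∂μ
      = (2 * (⟪w, x⟫ - y) * δ) • ∫ u, ⟪u, x⟫ • u ∂μ := by
  have hresidual : MemLp (fun u ↦ ⟪w + δ • u, x⟫ - y) 3 μ :=
    (((memLp_const w).add (hL3.const_smul δ)).inner_const x).sub (memLp_const y)
  have hsymm (u : E) : (⟪w + δ • u, x⟫ - y) ^ 2 • u + (⟪w + δ • -u, x⟫ - y) ^ 2 • -u
      = (2 : ℝ) • (2 * (⟪w, x⟫ - y) * δ) • ⟪u, x⟫ • u := by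
    simp only [inner_add_left, real_inner_smul_left, inner_neg_left]
    module
  refine smul_right_injective E (two_ne_zero (α := ℝ)) ?_
  calc (2 : ℝ) • ∫ u, (⟪w + δ • u, x⟫ - y) ^ 2 • u ∂μ
      = ∫ u, ((⟪w + δ • u, x⟫ - y) ^ 2 • u + (⟪w + δ • -u, x⟫ - y) ^ 2 • -u) ∂μ :=
        two_smul_integral_eq_integral_add_comp_neg (integrable_sq_smul_of_memLp_three hresidual hL3)
    _ = (2 : ℝ) • (2 * (⟪w, x⟫ - y) * δ) • ∫ u, ⟪u, x⟫ • u ∂μ := by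
        simp only [hsymm, integral_smul]

theorem integrable_inner_sq_of_memLp_two {E : Type*} [NormedAddCommGroup E] [InnerProductSpace ℝ E]
    [MeasurableSpace E] {μ : Measure E} (hL2 : MemLp id 2 μ) (x : E) :
    Integrable (fun u ↦ ⟪u, x⟫ ^ 2) μ :=
  (hL2.inner_const x).integrable_sq

namespace IsOrthogonallyInvariant

variable {E : Type*} [NormedAddCommGroup E] [InnerProductSpace ℝ E]
  [MeasurableSpace E] {μ : Measure E}

theorem smul (hμ : IsOrthogonallyInvariant μ) (c : ENNReal) : IsOrthogonallyInvariant (c • μ) :=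
  fun g ↦ (hμ g).smul_measure c

theorem isNegInvariant (hμ : IsOrthogonallyInvariant μ) : μ.IsNegInvariant :=
  ⟨(hμ (LinearIsometryEquiv.neg ℝ)).map_eq⟩

variable [BorelSpace E]

theorem integral_inner_sq_eq_of_norm_eq (hμ : IsOrthogonallyInvariant μ) {x z : E}
    (hxz : ‖x‖ = ‖z‖) : ∫ u, ⟪u, x⟫ ^ 2 ∂μ = ∫ u, ⟪u, z⟫ ^ 2 ∂μ := by
  let g := (ℝ ∙ (x - z))ᗮ.reflection
  have hg (u : E) : ⟪g u, x⟫ = ⟪u, z⟫ := by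
    rw [LinearIsometryEquiv.inner_map_eq_flip, Submodule.reflection_symm,
      Submodule.reflection_sub hxz]
  rw [← (hμ g).integral_comp g.toHomeomorph.measurableEmbedding]
  simp only [hg]

variable [FiniteDimensional ℝ E]

theorem finrank_mul_integral_inner_sq (hμ : IsOrthogonallyInvariant μ) (hL2 : MemLp id 2 μ)
    (x : E) : finrank ℝ E * ∫ u, ⟪u, x⟫ ^ 2 ∂μ = ‖x‖ ^ 2 * ∫ u, ‖u‖ ^ 2 ∂μ := by
  let b := stdOrthonormalBasis ℝ E
  have hb (i : Fin (finrank ℝ E)) :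
      ∫ u, ⟪u, x⟫ ^ 2 ∂μ = ‖x‖ ^ 2 * ∫ u, ⟪u, b i⟫ ^ 2 ∂μ := by
    rw [hμ.integral_inner_sq_eq_of_norm_eq (z := ‖x‖ • b i) (by simp [norm_smul]),
      ← integral_const_mul]
    simp only [real_inner_smul_right, mul_pow]
  calc finrank ℝ E * ∫ u, ⟪u, x⟫ ^ 2 ∂μ
      = ∑ i, ‖x‖ ^ 2 * ∫ u, ⟪u, b i⟫ ^ 2 ∂μ := by simp [← hb]
    _ = ‖x‖ ^ 2 * ∫ u, ∑ i, ⟪u, b i⟫ ^ 2 ∂μ := by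
      rw [← Finset.mul_sum,
        integral_finsetSum _ fun i _ ↦ integrable_inner_sq_of_memLp_two hL2 (b i)]
    _ = ‖x‖ ^ 2 * ∫ u, ‖u‖ ^ 2 ∂μ := by simp only [b.sum_sq_inner_left]

theorem finrank_mul_integral_inner_mul_inner (hμ : IsOrthogonallyInvariant μ)
    (hL2 : MemLp id 2 μ) (x z : E) :
    finrank ℝ E * ∫ u, ⟪u, x⟫ * ⟪u, z⟫ ∂μ = ⟪x, z⟫ * ∫ u, ‖u‖ ^ 2 ∂μ := by
  have polarization (u : E) : ⟪u, x⟫ * ⟪u, z⟫ = (⟪u, x + z⟫ ^ 2 - ⟪u, x - z⟫ ^ 2) / 4 := by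
    rw [inner_add_right, inner_sub_right]
    ring
  have hnorm : ‖x + z‖ ^ 2 - ‖x - z‖ ^ 2 = 4 * ⟪x, z⟫ := by
    rw [norm_add_sq_real, norm_sub_sq_real]
    ring
  simp only [polarization]
  rw [integral_div, integral_sub (integrable_inner_sq_of_memLp_two hL2 _)
    (integrable_inner_sq_of_memLp_two hL2 _)]
  linear_combination (hμ.finrank_mul_integral_inner_sq hL2 (x + z)
    - hμ.finrank_mul_integral_inner_sq hL2 (x - z) + (∫ u, ‖u‖ ^ 2 ∂μ) * hnorm) / 4

theorem finrank_smul_integral_inner_smul (hμ : IsOrthogonallyInvariant μ) (hL2 : MemLp id 2 μ)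
    (x : E) : (finrank ℝ E : ℝ) • ∫ u, ⟪u, x⟫ • u ∂μ = (∫ u, ‖u‖ ^ 2 ∂μ) • x := by
  have hint : Integrable (fun u : E ↦ ⟪u, x⟫ • u) μ :=
    memLp_one_iff_integrable.1 (hL2.smul (hL2.inner_const x))
  refine ext_inner_left ℝ fun z ↦ ?_
  rw [inner_smul_right, inner_smul_right, ← integral_inner hint]
  simp only [inner_smul_right]
  rw [real_inner_comm x z, mul_comm (∫ u, ‖u‖ ^ 2 ∂μ),
    ← hμ.finrank_mul_integral_inner_mul_inner hL2]
  simp only [real_inner_comm z]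

end IsOrthogonallyInvariant

section ToSphere

theorem preimage_smul_sphere_inter {E F : Type*} [NormedAddCommGroup E] [NormedSpace ℝ E]
    [NormedAddCommGroup F] [NormedSpace ℝ F] (g : E ≃ₗᵢ[ℝ] F) (I : Set ℝ) (t : Set F) :
    g ⁻¹' (I • (sphere 0 1 ∩ t)) = I • (sphere 0 1 ∩ g ⁻¹' t) := by
  have hsmul : g.symm '' (I • (sphere 0 1 ∩ t)) = I • (g.symm '' (sphere 0 1 ∩ t)) :=
    Set.image_image2_distrib_right fun r v ↦ map_smul g.symm r v
  rw [g.symm.image_eq_preimage_symm, g.symm.image_eq_preimage_symm] at hsmul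
  simpa using hsmul

variable {E F : Type*} [NormedAddCommGroup E] [NormedSpace ℝ E] [MeasurableSpace E] [BorelSpace E]
  [NormedAddCommGroup F] [NormedSpace ℝ F] [MeasurableSpace F] [BorelSpace F]

theorem map_coe_toSphere_apply (μ : Measure E) {t : Set E} (ht : MeasurableSet t) :
    μ.toSphere.map (↑) t = finrank ℝ E * μ (Set.Ioo (0 : ℝ) 1 • (sphere 0 1 ∩ t)) := by
  rw [Measure.map_apply measurable_subtype_coe ht,
    μ.toSphere_apply' (measurable_subtype_coe ht), Subtype.image_preimage_coe]

theorem measurePreserving_map_coe_toSphere {μ : Measure E} {ν : Measure F} {g : E ≃ₗᵢ[ℝ] F}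
    (hg : MeasurePreserving g μ ν) :
    MeasurePreserving g (μ.toSphere.map (↑)) (ν.toSphere.map (↑)) := by
  refine ⟨g.continuous.measurable, Measure.ext fun t ht ↦ ?_⟩
  rw [Measure.map_apply g.continuous.measurable ht, map_coe_toSphere_apply ν ht,
    map_coe_toSphere_apply μ (g.continuous.measurable ht), ← preimage_smul_sphere_inter,
    hg.measure_preimage_emb g.toHomeomorph.measurableEmbedding, g.toLinearEquiv.finrank_eq]

end ToSphere

namespace sphereUniform

variable (d : ℕ)

theorem isOrthogonallyInvariant : IsOrthogonallyInvariant (sphereUniform d) :=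
  IsOrthogonallyInvariant.smul
    (fun g ↦ measurePreserving_map_coe_toSphere g.measurePreserving) _

theorem ae_norm_eq_one : ∀ᵐ u ∂(sphereUniform d), ‖u‖ = 1 :=
  Measure.ae_smul_measure ((ae_map_iff measurable_subtype_coe.aemeasurable
    (measurableSet_eq_fun measurable_norm measurable_const)).2
      (.of_forall norm_eq_of_mem_sphere)) _

variable [NeZero d]

instance isProbabilityMeasure : IsProbabilityMeasure (sphereUniform d) where
  measure_univ := by
    rw [sphereUniform, Measure.smul_apply, Measure.map_apply measurable_subtype_coe .univ,
      Set.preimage_univ, smul_eq_mul]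
    exact ENNReal.inv_mul_cancel (Measure.measure_univ_ne_zero.2 (Measure.toSphere_ne_zero _))
      (measure_ne_top _ _)

theorem memLp_id (p : ENNReal) : MemLp id p (sphereUniform d) :=
  .of_bound aestronglyMeasurable_id 1 ((ae_norm_eq_one d).mono fun _ hu ↦ hu.le)

theorem integral_norm_sq : ∫ u, ‖u‖ ^ 2 ∂(sphereUniform d) = 1 := by
  calc ∫ u, ‖u‖ ^ 2 ∂(sphereUniform d) = ∫ _, (1 : ℝ) ∂(sphereUniform d) :=
        integral_congr_ae ((ae_norm_eq_one d).mono fun u hu ↦ by simp only [hu, one_pow])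
    _ = 1 := by simp

end sphereUniform

theorem spherical_estimator_unbiased_for_squared_loss_general
    {E : Type*} [NormedAddCommGroup E] [InnerProductSpace ℝ E] [FiniteDimensional ℝ E]
    [MeasurableSpace E] [BorelSpace E] {μ : Measure E} [IsFiniteMeasure μ]
    (hμ : IsOrthogonallyInvariant μ) (hL3 : MemLp id 3 μ) (hnorm : ∫ u, ‖u‖ ^ 2 ∂μ = 1)
    (w x : E) (y : ℝ) {δ : ℝ} (hδ : δ ≠ 0) :
    ((finrank ℝ E / δ : ℝ) • ∫ u, (⟪w + δ • u, x⟫ - y) ^ 2 • u ∂μ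
      = (2 * (⟪w, x⟫ - y)) • x) ∧
    HasGradientAt (fun v : E ↦ (⟪v, x⟫ - y) ^ 2) ((2 * (⟪w, x⟫ - y)) • x) w := by
  refine ⟨?_, hasGradientAt_inner_sub_sq w x y⟩
  have := hμ.isNegInvariant
  have hL2 : MemLp id 2 μ := hL3.mono_exponent (by norm_num)
  calc (finrank ℝ E / δ : ℝ) • ∫ u, (⟪w + δ • u, x⟫ - y) ^ 2 • u ∂μ
      = (2 * (⟪w, x⟫ - y)) • (finrank ℝ E : ℝ) • ∫ u, ⟪u, x⟫ • u ∂μ := by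
        rw [integral_inner_add_smul_sub_sq_smul hL3, smul_smul, smul_smul]
        congr 1
        field_simp
    _ = (2 * (⟪w, x⟫ - y)) • x := by
        rw [hμ.finrank_smul_integral_inner_smul hL2, hnorm, one_smul]

/-- Exact unbiasedness of the spherical parameter-space estimator
for the squared loss. For any `w, x, y, δ > 0`,
`(d/δ) • 𝔼_{u ∼ sphere} [(⟪w + δu, x⟫ − y)² • u] = 2(⟪w, x⟫ − y) • x`, which is the
gradient of `w ↦ (⟪w, x⟫ − y)²`. -/
theorem spherical_estimator_unbiased_for_squared_loss
    (d : ℕ) (hd : 1 ≤ d)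
    (w x : EuclideanSpace ℝ (Fin d)) (y δ : ℝ) (hδ : 0 < δ) :
    (((d : ℝ) / δ) •
        ∫ u, ((⟪w + δ • u, x⟫ - y) ^ 2) • u ∂(sphereUniform d)
      = (2 * (⟪w, x⟫ - y)) • x) ∧
    HasGradientAt (fun v : EuclideanSpace ℝ (Fin d) => (⟪v, x⟫ - y) ^ 2)
      ((2 * (⟪w, x⟫ - y)) • x) w := by
  have : NeZero d := ⟨Nat.one_le_iff_ne_zero.1 hd⟩
  simpa only [finrank_euclideanSpace_fin] using
    spherical_estimator_unbiased_for_squared_loss_general (sphereUniform.isOrthogonallyInvariant d)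
      (sphereUniform.memLp_id d 3) (sphereUniform.integral_norm_sq d) w x y hδ.ne'
end
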